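/- Assume: if t₀ = min 𝕋 then f satisfies (H∞), (H^rd_loc-Lip) and (H^forw_stab); if t₀ = max 𝕋 then f satisfies (H∞), (H^ld_loc-Lip) and (H^back_regr); if t₀ ≠ inf 𝕋 and t₀ ≠ sup 𝕋 then f satisfies (H∞), (H^rd_loc-Lip), (H^forw_stab), (H^ld_loc-Lip) and (H^back_regr). Then there exist a,b ∈ 𝕋 with a ⊴ t₀ ⊴ b and a function q: [a,b]_𝕋 → Ω such that (q,[a,b]_𝕋) is a solution of (Δ-CP) (existence of a local solution). -/

import Mathlib

/-!
# Local existence for the Δ-Cauchy problem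

The map `lastPt T`, sending a real `s` to the last point of `T` at or before `s`, carries Lebesgue
measure on `[a, b)` to the Δ-measure on `[a, b)_𝕋` (`ae_deltaMeasure_iff`, `ae_lastPt`). The dynamic
equation on `T` thus becomes an equation with retarded argument on the real line,
`Q'(s) = f (Q (lastPt T s)) (lastPt T s)` for a.e. `s`, whose solutions are Lipschitz primitives of
bounded densities (`IsSolDensity`). The restriction of such a `Q` to `T` solves the Δ-Cauchy
problem: at right-dense points by Lebesgue differentiation, and across a gap because the density is
constant there (`IsSolDensity.isSolIcc`).

A density is built separately on each side of `t₀` that contains points of `T`. If `t₀` is dense on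
that side, the local Lipschitz and boundedness hypotheses make the integral operator a contraction
on a short interval (`exists_picard`); the integrand is measurable by
`aestronglyMeasurable_superposition`. If `t₀` is right-scattered, one explicit step
`q(σ(t₀)) = q₀ + μ(t₀) f(q₀, t₀)` suffices, and it stays in `Ω` by forward stability. If `t₀` is
left-scattered, the value at `ρ(t₀)` is obtained by inverting `x ↦ x + μ(ρ(t₀)) f(x, ρ(t₀))`. At an
interior point the two densities are concatenated (`IsSolDensity.glue`).
-/

open MeasureTheory Set Filter Classical

noncomputable section
open scoped Classical

/-- The forward jump operator `σ` of a time scale `T`. -/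
def tsSigma (T : Set ℝ) (t : ℝ) : ℝ :=
  if ({s | s ∈ T ∧ t < s}).Nonempty then sInf {s | s ∈ T ∧ t < s} else t

/-- The backward jump operator `ρ` of a time scale `T`. -/
def tsRho (T : Set ℝ) (t : ℝ) : ℝ :=
  if ({s | s ∈ T ∧ s < t}).Nonempty then sSup {s | s ∈ T ∧ s < t} else t

/-- The graininess function `μ(t) = σ(t) - t`. -/
def tsGrain (T : Set ℝ) (t : ℝ) : ℝ := tsSigma T t - t

/-- `t` is a right-scattered point of `T`. -/
def RightScattered (T : Set ℝ) (t : ℝ) : Prop := t < tsSigma T t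

/-- `t` is a right-dense point of `T`. -/
def RightDense (T : Set ℝ) (t : ℝ) : Prop := tsSigma T t = t

/-- `t` is a left-scattered point of `T`. -/
def LeftScattered (T : Set ℝ) (t : ℝ) : Prop := tsRho T t < t

/-- `t` is a left-dense point of `T`. -/
def LeftDense (T : Set ℝ) (t : ℝ) : Prop := tsRho T t = t

/-- `𝕋 \ {sup 𝕋}`: the time scale minus its maximum (if the maximum exists). -/
def tsUpDomain (T : Set ℝ) : Set ℝ := {t | t ∈ T ∧ ¬ IsGreatest T t}

/-- The Lebesgue Δ-measure on the time scale `T`: Lebesgue measure restricted to `T`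
plus `Σ_{r ∈ ℛ} μ(r)·δ_r` over right-scattered points `r`. -/
def deltaMeasure (T : Set ℝ) : Measure ℝ :=
  volume.restrict T +
    Measure.sum (fun r : {t : ℝ // t ∈ T ∧ RightScattered T t} =>
      ENNReal.ofReal (tsGrain T r.1) • Measure.dirac r.1)

/-- Δ-differentiability of `q` at `t`, with Δ-derivative `q'`. -/
def HasDeltaDerivAt {n : ℕ} (T : Set ℝ) (q : ℝ → EuclideanSpace ℝ (Fin n))
    (q' : EuclideanSpace ℝ (Fin n)) (t : ℝ) : Prop :=
  ∀ ε > (0:ℝ), ∃ U ∈ nhds t, ∀ s ∈ U ∩ T,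
    ‖q (tsSigma T t) - q s - (tsSigma T t - s) • q'‖ ≤ ε * |tsSigma T t - s|

/-- Absolute continuity of `q` on `[a,b]_𝕋`. -/
def DeltaAC {n : ℕ} (T : Set ℝ) (a b : ℝ) (q : ℝ → EuclideanSpace ℝ (Fin n)) : Prop :=
  ∀ ε > (0:ℝ), ∃ δ > (0:ℝ), ∀ (m : ℕ) (u v : ℕ → ℝ),
    (∀ k < m, u k ∈ Icc a b ∩ T) → (∀ k < m, v k ∈ Icc a b ∩ T) →
    (∀ k < m, u k ≤ v k) →
    (∀ i < m, ∀ j < m, i ≠ j → Disjoint (Icc (u i) (v i)) (Icc (u j) (v j))) →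
    (∑ k ∈ Finset.range m, (v k - u k)) < δ →
    (∑ k ∈ Finset.range m, ‖q (v k) - q (u k)‖) < ε

/-- `f` is a Δ-Carathéodory function on `Ω × 𝕋\{sup 𝕋}`. -/
def DeltaCaratheodory {n : ℕ} (T : Set ℝ) (Ω : Set (EuclideanSpace ℝ (Fin n)))
    (f : EuclideanSpace ℝ (Fin n) → ℝ → EuclideanSpace ℝ (Fin n)) : Prop :=
  (∀ x ∈ Ω, AEMeasurable (fun t => f x t) ((deltaMeasure T).restrict (tsUpDomain T))) ∧
    ∀ᵐ t ∂((deltaMeasure T).restrict (tsUpDomain T)), ContinuousOn (fun x => f x t) Ω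

/-- Hypothesis (H∞): `f` is locally bounded. -/
def HInfty {n : ℕ} (T : Set ℝ) (Ω : Set (EuclideanSpace ℝ (Fin n)))
    (f : EuclideanSpace ℝ (Fin n) → ℝ → EuclideanSpace ℝ (Fin n)) : Prop :=
  ∀ K : Set (EuclideanSpace ℝ (Fin n)), K ⊆ Ω → IsCompact K →
    ∀ a ∈ T, ∀ b ∈ T, a < b →
      ∃ M : ℝ, 0 ≤ M ∧
        ∀ᵐ t ∂((deltaMeasure T).restrict (Ico a b ∩ T)), ∀ x ∈ K, ‖f x t‖ ≤ M

/-- Hypothesis (H^rd_loc-Lip): local Lipschitz continuity at right-dense points. -/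
def HrdLocLip {n : ℕ} (T : Set ℝ) (Ω : Set (EuclideanSpace ℝ (Fin n)))
    (f : EuclideanSpace ℝ (Fin n) → ℝ → EuclideanSpace ℝ (Fin n)) : Prop :=
  ∀ xb ∈ Ω, ∀ tb ∈ T, ¬ IsGreatest T tb → RightDense T tb →
    ∃ R > (0:ℝ), ∃ δ > (0:ℝ), ∃ L : ℝ, 0 ≤ L ∧
      Metric.closedBall xb R ⊆ Ω ∧ tb + δ ∈ T ∧
      ∀ᵐ t ∂((deltaMeasure T).restrict (Ico tb (tb + δ) ∩ T)),
        ∀ x₁ ∈ Metric.closedBall xb R, ∀ x₂ ∈ Metric.closedBall xb R,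
          ‖f x₁ t - f x₂ t‖ ≤ L * ‖x₁ - x₂‖

/-- Hypothesis (H^ld_loc-Lip): local Lipschitz continuity at left-dense points. -/
def HldLocLip {n : ℕ} (T : Set ℝ) (Ω : Set (EuclideanSpace ℝ (Fin n)))
    (f : EuclideanSpace ℝ (Fin n) → ℝ → EuclideanSpace ℝ (Fin n)) : Prop :=
  ∀ xb ∈ Ω, ∀ tb ∈ T, ¬ IsLeast T tb → LeftDense T tb →
    ∃ R > (0:ℝ), ∃ δ > (0:ℝ), ∃ L : ℝ, 0 ≤ L ∧
      Metric.closedBall xb R ⊆ Ω ∧ tb - δ ∈ T ∧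
      ∀ᵐ t ∂((deltaMeasure T).restrict (Ico (tb - δ) tb ∩ T)),
        ∀ x₁ ∈ Metric.closedBall xb R, ∀ x₂ ∈ Metric.closedBall xb R,
          ‖f x₁ t - f x₂ t‖ ≤ L * ‖x₁ - x₂‖

/-- Hypothesis (H^forw_stab): `G⁺(t) : x ↦ x + μ(t) f(x,t)` maps `Ω` into `Ω`. -/
def HforwStab {n : ℕ} (T : Set ℝ) (Ω : Set (EuclideanSpace ℝ (Fin n)))
    (f : EuclideanSpace ℝ (Fin n) → ℝ → EuclideanSpace ℝ (Fin n)) : Prop :=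
  ∀ t ∈ T, RightScattered T t → ∀ x ∈ Ω, x + tsGrain T t • f x t ∈ Ω

/-- Hypothesis (H^back_regr): `G⁺(t)` is a bijection from `Ω` onto `ℝⁿ`. -/
def HbackRegr {n : ℕ} (T : Set ℝ) (Ω : Set (EuclideanSpace ℝ (Fin n)))
    (f : EuclideanSpace ℝ (Fin n) → ℝ → EuclideanSpace ℝ (Fin n)) : Prop :=
  ∀ t ∈ T, RightScattered T t → Set.BijOn (fun x => x + tsGrain T t • f x t) Ω univ

/-- Hypothesis (H^back_stab): `G⁻(t) : x ↦ x - μ(t) f(x,t)` maps `Ω` into `Ω`. -/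
def HbackStab {n : ℕ} (T : Set ℝ) (Ω : Set (EuclideanSpace ℝ (Fin n)))
    (f : EuclideanSpace ℝ (Fin n) → ℝ → EuclideanSpace ℝ (Fin n)) : Prop :=
  ∀ t ∈ T, RightScattered T t → ∀ x ∈ Ω, x - tsGrain T t • f x t ∈ Ω

/-- Hypothesis (H^forw_regr): `G⁻(t)` is a bijection from `Ω` onto `ℝⁿ`. -/
def HforwRegr {n : ℕ} (T : Set ℝ) (Ω : Set (EuclideanSpace ℝ (Fin n)))
    (f : EuclideanSpace ℝ (Fin n) → ℝ → EuclideanSpace ℝ (Fin n)) : Prop :=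
  ∀ t ∈ T, RightScattered T t → Set.BijOn (fun x => x - tsGrain T t • f x t) Ω univ

/-- Hypothesis (H^glob_Lip): global Lipschitz continuity. -/
def HglobLip {n : ℕ} (T : Set ℝ) (Ω : Set (EuclideanSpace ℝ (Fin n)))
    (f : EuclideanSpace ℝ (Fin n) → ℝ → EuclideanSpace ℝ (Fin n)) : Prop :=
  ∃ L : ℝ, 0 ≤ L ∧
    ∀ᵐ t ∂((deltaMeasure T).restrict (tsUpDomain T)),
      ∀ x₁ ∈ Ω, ∀ x₂ ∈ Ω, ‖f x₁ t - f x₂ t‖ ≤ L * ‖x₁ - x₂‖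

/-- The relation `a ⊴ t₀ ⊴ b`. -/
def Trile (T : Set ℝ) (t₀ a b : ℝ) : Prop :=
  (IsLeast T t₀ ∧ a = t₀ ∧ t₀ < b) ∨
  (IsGreatest T t₀ ∧ a < t₀ ∧ t₀ = b) ∨
  (¬ IsLeast T t₀ ∧ ¬ IsGreatest T t₀ ∧ a < t₀ ∧ t₀ < b)

/-- `(q, [a,b]_𝕋)` is a solution of the non shifted Δ-Cauchy problem (Δ-CP). -/
def IsSolIcc {n : ℕ} (T : Set ℝ) (Ω : Set (EuclideanSpace ℝ (Fin n)))
    (f : EuclideanSpace ℝ (Fin n) → ℝ → EuclideanSpace ℝ (Fin n))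
    (t₀ : ℝ) (q₀ : EuclideanSpace ℝ (Fin n))
    (q : ℝ → EuclideanSpace ℝ (Fin n)) (a b : ℝ) : Prop :=
  (∀ t ∈ Icc a b ∩ T, q t ∈ Ω) ∧ DeltaAC T a b q ∧ q t₀ = q₀ ∧
    ∀ᵐ t ∂((deltaMeasure T).restrict (Ico a b ∩ T)),
      HasDeltaDerivAt T q (f (q t) t) t

/-- `(q, [a,b]_𝕋)` is a solution of the shifted Δ-Cauchy problem (Δ-CP^σ). -/
def IsSolIccS {n : ℕ} (T : Set ℝ) (Ω : Set (EuclideanSpace ℝ (Fin n)))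
    (f : EuclideanSpace ℝ (Fin n) → ℝ → EuclideanSpace ℝ (Fin n))
    (t₀ : ℝ) (q₀ : EuclideanSpace ℝ (Fin n))
    (q : ℝ → EuclideanSpace ℝ (Fin n)) (a b : ℝ) : Prop :=
  (∀ t ∈ Icc a b ∩ T, q t ∈ Ω) ∧ DeltaAC T a b q ∧ q t₀ = q₀ ∧
    ∀ᵐ t ∂((deltaMeasure T).restrict (Ico a b ∩ T)),
      HasDeltaDerivAt T q (f (q (tsSigma T t)) t) t

/-- `I_𝕋 ∈ 𝕀`: `I` is a real interval containing points `a, b` of `T` with `a ⊴ t₀ ⊴ b`. -/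
def MemI (T : Set ℝ) (t₀ : ℝ) (I : Set ℝ) : Prop :=
  I.OrdConnected ∧ ∃ a ∈ I ∩ T, ∃ b ∈ I ∩ T, Trile T t₀ a b

/-- `(q, I_𝕋)` is a solution of (Δ-CP). -/
def IsSol {n : ℕ} (T : Set ℝ) (Ω : Set (EuclideanSpace ℝ (Fin n)))
    (f : EuclideanSpace ℝ (Fin n) → ℝ → EuclideanSpace ℝ (Fin n))
    (t₀ : ℝ) (q₀ : EuclideanSpace ℝ (Fin n))
    (q : ℝ → EuclideanSpace ℝ (Fin n)) (I : Set ℝ) : Prop :=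
  MemI T t₀ I ∧ (∀ t ∈ I ∩ T, q t ∈ Ω) ∧
    ∀ a ∈ I ∩ T, ∀ b ∈ I ∩ T, Trile T t₀ a b → IsSolIcc T Ω f t₀ q₀ q a b

/-- `(q, I_𝕋)` is a solution of (Δ-CP^σ). -/
def IsSolS {n : ℕ} (T : Set ℝ) (Ω : Set (EuclideanSpace ℝ (Fin n)))
    (f : EuclideanSpace ℝ (Fin n) → ℝ → EuclideanSpace ℝ (Fin n))
    (t₀ : ℝ) (q₀ : EuclideanSpace ℝ (Fin n))
    (q : ℝ → EuclideanSpace ℝ (Fin n)) (I : Set ℝ) : Prop :=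
  MemI T t₀ I ∧ (∀ t ∈ I ∩ T, q t ∈ Ω) ∧
    ∀ a ∈ I ∩ T, ∀ b ∈ I ∩ T, Trile T t₀ a b → IsSolIccS T Ω f t₀ q₀ q a b

/-- `(q₁, I₁_𝕋)` is an extension of `(q, I_𝕋)`. -/
def SolExtends {n : ℕ} (T : Set ℝ) (q₁ : ℝ → EuclideanSpace ℝ (Fin n)) (I₁ : Set ℝ)
    (q : ℝ → EuclideanSpace ℝ (Fin n)) (I : Set ℝ) : Prop :=
  I ∩ T ⊆ I₁ ∩ T ∧ EqOn q₁ q (I ∩ T)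

/-- `(q, I_𝕋)` is a maximal solution of (Δ-CP). -/
def IsMaxSol {n : ℕ} (T : Set ℝ) (Ω : Set (EuclideanSpace ℝ (Fin n)))
    (f : EuclideanSpace ℝ (Fin n) → ℝ → EuclideanSpace ℝ (Fin n))
    (t₀ : ℝ) (q₀ : EuclideanSpace ℝ (Fin n))
    (q : ℝ → EuclideanSpace ℝ (Fin n)) (I : Set ℝ) : Prop :=
  IsSol T Ω f t₀ q₀ q I ∧
    ∀ q₁ I₁, IsSol T Ω f t₀ q₀ q₁ I₁ → SolExtends T q₁ I₁ q I → I₁ ∩ T = I ∩ T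

/-- `(q, I_𝕋)` is a maximal solution of (Δ-CP^σ). -/
def IsMaxSolS {n : ℕ} (T : Set ℝ) (Ω : Set (EuclideanSpace ℝ (Fin n)))
    (f : EuclideanSpace ℝ (Fin n) → ℝ → EuclideanSpace ℝ (Fin n))
    (t₀ : ℝ) (q₀ : EuclideanSpace ℝ (Fin n))
    (q : ℝ → EuclideanSpace ℝ (Fin n)) (I : Set ℝ) : Prop :=
  IsSolS T Ω f t₀ q₀ q I ∧
    ∀ q₁ I₁, IsSolS T Ω f t₀ q₀ q₁ I₁ → SolExtends T q₁ I₁ q I → I₁ ∩ T = I ∩ T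

/-! ### Elementary facts about time scales -/

/-- The last point of the time scale `T` at or before `s`. On an interval `[a, b)` with
`a, b ∈ T` this is a retraction onto the points of `T` in the interval, collapsing every
gap `[t, σ(t))` to its left end `t`; it pushes Lebesgue measure forward to the Δ-measure. If `T ∩ Iic s` is empty the value is junk. -/
def lastPt (T : Set ℝ) (s : ℝ) : ℝ := sSup (T ∩ Iic s)

section TimeScale

variable {T : Set ℝ} {a b s t : ℝ}

lemma lastPt_le (ha : a ∈ T) (has : a ≤ s) : lastPt T s ≤ s :=
  csSup_le ⟨a, ha, has⟩ fun _ hx => hx.2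

lemma le_lastPt (ha : a ∈ T) (has : a ≤ s) : a ≤ lastPt T s :=
  le_csSup ⟨s, fun _ hx => hx.2⟩ ⟨ha, has⟩

lemma lastPt_mem (hT : IsClosed T) (ha : a ∈ T) (has : a ≤ s) : lastPt T s ∈ T :=
  ((hT.inter isClosed_Iic).csSup_mem ⟨a, ha, has⟩ ⟨s, fun _ hx => hx.2⟩).1

lemma lastPt_eq (hs : s ∈ T) : lastPt T s = s :=
  le_antisymm (lastPt_le hs le_rfl) (le_lastPt hs le_rfl)

lemma lastPt_monotoneOn (ha : a ∈ T) : MonotoneOn (lastPt T) (Ico a b) := by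
  intro x hx y hy hxy
  exact csSup_le_csSup ⟨y, fun _ hz => hz.2⟩ ⟨a, ha, hx.1⟩ fun z hz => ⟨hz.1, hz.2.trans hxy⟩

lemma tsSigma_of_lt (hb : b ∈ T) (htb : t < b) :
    tsSigma T t = sInf {s | s ∈ T ∧ t < s} :=
  if_pos ⟨b, hb, htb⟩

lemma tsSigma_le (hb : b ∈ T) (htb : t < b) : tsSigma T t ≤ b := by
  rw [tsSigma_of_lt hb htb]
  exact csInf_le ⟨t, fun _ hx => hx.2.le⟩ ⟨hb, htb⟩

lemma le_tsSigma : t ≤ tsSigma T t := by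
  unfold tsSigma
  split_ifs with h
  · exact le_csInf h fun _ hx => hx.2.le
  · exact le_rfl

lemma tsSigma_mem (hT : IsClosed T) (ht : t ∈ T) : tsSigma T t ∈ T := by
  unfold tsSigma
  split_ifs with h
  · have := csInf_mem_closure h ⟨t, fun _ hx => hx.2.le⟩
    exact hT.closure_subset_iff.2 (fun x hx => hx.1) this
  · exact ht

lemma rightDense_or_rightScattered (T : Set ℝ) (t : ℝ) : RightDense T t ∨ RightScattered T t :=
  (le_tsSigma (T := T) (t := t)).eq_or_lt.imp Eq.symm id

/-- Points of a gap `[t, σ(t))` are sent to `t`. -/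
lemma lastPt_of_mem_gap (ht : t ∈ T) (hts : t ≤ s) (hs : s < tsSigma T t) : lastPt T s = t := by
  refine le_antisymm (csSup_le ⟨t, ht, hts⟩ fun x hx => ?_) (le_lastPt ht hts)
  by_contra! h
  exact absurd (tsSigma_le hx.1 h) (not_le.2 (lt_of_le_of_lt hx.2 hs))

/-- A real point outside `T` lies in a gap, so its image under `lastPt` is right-scattered. -/
lemma rightScattered_lastPt (hT : IsClosed T) (ha : a ∈ T) (has : a ≤ s) (hb : b ∈ T)
    (hsb : s < b) (hs : s ∉ T) : RightScattered T (lastPt T s) := by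
  have hmem := lastPt_mem hT ha has
  have hlt : lastPt T s < s :=
    lt_of_le_of_ne (lastPt_le ha has) fun h => hs (h ▸ hmem)
  refine lt_of_lt_of_le hlt ?_
  rw [tsSigma_of_lt hb (hlt.trans hsb)]
  refine le_csInf ⟨b, hb, hlt.trans hsb⟩ fun x hx => ?_
  by_contra! h
  exact absurd (le_lastPt hx.1 h.le) (not_le.2 hx.2)

lemma countable_rightScattered (T : Set ℝ) : {t | t ∈ T ∧ RightScattered T t}.Countable := by
  refine Set.PairwiseDisjoint.countable_of_Ioo (y := tsSigma T) ?_ fun x hx => hx.2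
  intro x hx y hy hxy
  refine Set.disjoint_left.2 fun z hz hz' => ?_
  rcases lt_or_gt_of_ne hxy with h | h
  · exact absurd (tsSigma_le hy.1 h) (not_le.2 (hz'.1.trans hz.2))
  · exact absurd (tsSigma_le hx.1 h) (not_le.2 (hz.1.trans hz'.2))

/-! ### Null sets of the Δ-measure -/

/-- A property holds Δ-a.e. on `A ⊆ T` exactly when it holds Lebesgue-a.e. on `A` and at every
right-scattered point of `A`, these points being the atoms. -/
lemma ae_deltaMeasure_iff {A : Set ℝ} (hA : MeasurableSet A) (hAT : A ⊆ T) {P : ℝ → Prop} :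
    (∀ᵐ t ∂((deltaMeasure T).restrict A), P t) ↔
      (∀ᵐ t, t ∈ A → P t) ∧ ∀ t ∈ A, RightScattered T t → P t := by
  have : Countable {t : ℝ // t ∈ T ∧ RightScattered T t} := (countable_rightScattered T).to_subtype
  rw [ae_restrict_iff' hA, deltaMeasure, ae_add_measure_iff, Measure.ae_sum_iff]
  refine and_congr ?_ ?_
  · rw [← ae_restrict_iff' hA, Measure.restrict_restrict hA, inter_eq_left.2 hAT,
      ae_restrict_iff' hA]
  · constructor
    · intro h t ht hs
      have h1 := h ⟨t, hAT ht, hs⟩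
      rw [Measure.ae_ennreal_smul_measure_iff
        (by simpa [tsGrain, RightScattered] using hs)] at h1
      rw [ae_dirac_eq] at h1
      exact h1 ht
    · intro h t
      refine Measure.ae_smul_measure ?_ _
      rw [ae_dirac_eq]
      exact fun ht => h t ht t.2.2

/-- A Δ-a.e. property on `[a, b)_𝕋` pulls back along `lastPt` to a Lebesgue-a.e. property on the
real interval `[a, b)`. -/
lemma ae_lastPt (hT : IsClosed T) (ha : a ∈ T) (hb : b ∈ T) {P : ℝ → Prop}
    (h : ∀ᵐ t ∂((deltaMeasure T).restrict (Ico a b ∩ T)), P t) :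
    ∀ᵐ s ∂(volume.restrict (Ico a b)), P (lastPt T s) := by
  rw [ae_deltaMeasure_iff (measurableSet_Ico.inter hT.measurableSet) inter_subset_right] at h
  rw [ae_restrict_iff' measurableSet_Ico]
  filter_upwards [h.1] with s hs hsI
  by_cases hsT : s ∈ T
  · rw [lastPt_eq hsT]
    exact hs ⟨hsI, hsT⟩
  · exact h.2 _ ⟨⟨le_lastPt ha hsI.1, (lastPt_le ha hsI.1).trans_lt hsI.2⟩, lastPt_mem hT ha hsI.1⟩
      (rightScattered_lastPt hT ha hsI.1 hb hsI.2 hsT)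

lemma ae_Ico_of_ae_upDomain (hb : b ∈ T) {P : ℝ → Prop}
    (h : ∀ᵐ t ∂((deltaMeasure T).restrict (tsUpDomain T)), P t) :
    ∀ᵐ t ∂((deltaMeasure T).restrict (Ico a b ∩ T)), P t :=
  have hsub : Ico a b ∩ T ⊆ tsUpDomain T :=
    fun _ ht => ⟨ht.2, fun hg => absurd (hg.2 hb) (not_le.2 ht.1.2)⟩
  ae_restrict_of_ae_restrict_of_subset hsub h

end TimeScale

/-! ### Measurability of superpositions -/

section Caratheodory

variable {E : Type*} [NormedAddCommGroup E] [MeasurableSpace E] [BorelSpace E]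
  [SecondCountableTopology E] {α : Type*} [MeasurableSpace α]

/-- A Carathéodory function composed with a measurable function is measurable: this is clear for
simple functions, and the general case follows by continuity in the first variable. -/
lemma aestronglyMeasurable_superposition {m : Measure α} {K : Set E} {u : E → α → E} {y : α → E}
    (hu : ∀ x ∈ K, AEStronglyMeasurable (u x) m)
    (hc : ∀ᵐ s ∂m, ContinuousOn (fun x => u x s) K)
    (hy : Measurable y) (hyK : ∀ s, y s ∈ K) :
    AEStronglyMeasurable (fun s => u (y s) s) m := by
  rcases isEmpty_or_nonempty α with hα | ⟨⟨s₀⟩⟩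
  · exact (StronglyMeasurable.of_subsingleton_dom).aestronglyMeasurable
  let φ : ℕ → SimpleFunc α E := SimpleFunc.approxOn y hy K (y s₀) (hyK s₀)
  have hφK : ∀ k s, φ k s ∈ K := SimpleFunc.approxOn_mem hy (hyK s₀)
  have hφ : ∀ s, Tendsto (fun k => φ k s) atTop (nhds (y s)) := fun s =>
    SimpleFunc.tendsto_approxOn hy (hyK s₀) (subset_closure (hyK s))
  refine aestronglyMeasurable_of_tendsto_ae atTop (f := fun k s => u (φ k s) s) (fun k => ?_) ?_
  · have : (fun s => u (φ k s) s) =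
        fun s => ∑ c ∈ (φ k).range, ((φ k) ⁻¹' {c}).indicator (u c) s := by
      ext1 s
      rw [Finset.sum_eq_single (φ k s)]
      · simp
      · intro c _ hcs
        simp [Ne.symm hcs]
      · intro h
        exact absurd (SimpleFunc.mem_range_self _ _) h
    rw [this]
    refine Finset.aestronglyMeasurable_fun_sum _ fun c hcr => ?_
    obtain ⟨s, rfl⟩ := SimpleFunc.mem_range.1 hcr
    exact (hu _ (hφK k s)).indicator ((φ k).measurableSet_fiber _)
  · filter_upwards [hc] with s hs
    exact ((hs (y s) (hyK s)).tendsto).comp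
      (tendsto_nhdsWithin_iff.2 ⟨hφ s, Eventually.of_forall fun k => hφK k s⟩)

end Caratheodory

/-! ### Primitives of bounded functions -/

section Primitive

variable {E : Type*} [NormedAddCommGroup E]

lemma locallyIntegrable_of_bound {g : ℝ → E} {M : ℝ} (hg : AEStronglyMeasurable g volume)
    (hM : ∀ᵐ s, ‖g s‖ ≤ M) : LocallyIntegrable g volume :=
  (memLp_top_of_bound hg M hM).locallyIntegrable le_top

lemma intervalIntegrable_of_bound {g : ℝ → E} {M : ℝ} (hg : AEStronglyMeasurable g volume)
    (hM : ∀ᵐ s, ‖g s‖ ≤ M) (u v : ℝ) : IntervalIntegrable g volume u v :=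
  ((locallyIntegrable_of_bound hg hM).integrableOn_isCompact isCompact_uIcc).intervalIntegrable

variable [NormedSpace ℝ E]

/-- The primitive of `g` taking the value `q₀` at `t₀`. -/
def primitiveAt (t₀ : ℝ) (q₀ : E) (g : ℝ → E) (s : ℝ) : E := q₀ + ∫ τ in t₀..s, g τ

@[simp] lemma primitiveAt_self (t₀ : ℝ) (q₀ : E) (g : ℝ → E) : primitiveAt t₀ q₀ g t₀ = q₀ := by
  simp [primitiveAt]

variable {g : ℝ → E} {M : ℝ}

lemma primitiveAt_sub (hg : AEStronglyMeasurable g volume) (hM : ∀ᵐ s, ‖g s‖ ≤ M)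
    (t₀ : ℝ) (q₀ : E) (u v : ℝ) :
    primitiveAt t₀ q₀ g v - primitiveAt t₀ q₀ g u = ∫ τ in u..v, g τ := by
  have hi := intervalIntegrable_of_bound hg hM
  rw [primitiveAt, primitiveAt, add_sub_add_left_eq_sub,
    intervalIntegral.integral_interval_sub_left (hi _ _) (hi _ _)]

lemma norm_primitiveAt_sub_le (hg : AEStronglyMeasurable g volume) (hM : ∀ᵐ s, ‖g s‖ ≤ M)
    (t₀ : ℝ) (q₀ : E) (u v : ℝ) :
    ‖primitiveAt t₀ q₀ g v - primitiveAt t₀ q₀ g u‖ ≤ M * |v - u| := by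
  rw [primitiveAt_sub hg hM]
  exact intervalIntegral.norm_integral_le_of_norm_le_const_ae (hM.mono fun _ h _ => h)

lemma continuous_primitiveAt (hg : AEStronglyMeasurable g volume) (hM : ∀ᵐ s, ‖g s‖ ≤ M)
    (t₀ : ℝ) (q₀ : E) : Continuous (primitiveAt t₀ q₀ g) :=
  continuous_const.add
    (intervalIntegral.continuous_primitive (intervalIntegrable_of_bound hg hM) t₀)

/-- An integrand supported on `[a, b)` with bound `C` has integral at most `C (b - a)`,
whatever the interval of integration. -/
lemma norm_integral_indicator_le {a b C : ℝ} (hab : a ≤ b) (hC0 : 0 ≤ C) {h : ℝ → E}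
    (hC : ∀ᵐ s ∂(volume.restrict (Ico a b)), ‖h s‖ ≤ C) (u v : ℝ) :
    ‖∫ τ in u..v, (Ico a b).indicator h τ‖ ≤ C * (b - a) := by
  rw [intervalIntegral.norm_integral_eq_norm_integral_uIoc, setIntegral_indicator measurableSet_Ico]
  have hsub : uIoc u v ∩ Ico a b ⊆ Ico a b := inter_subset_right
  have hvol : volume (Ico a b) < ⊤ := by simp
  refine (norm_setIntegral_le_of_norm_le_const_ae (lt_of_le_of_lt (measure_mono hsub) hvol)
    (ae_restrict_of_ae_restrict_of_subset hsub hC)).trans ?_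
  have : volume.real (Ico a b) = b - a := by simp [hab]
  rw [← this]
  exact mul_le_mul_of_nonneg_left (measureReal_mono hsub hvol.ne) hC0

/-! ### The Picard fixed point -/

open BoundedContinuousFunction in
/-- Picard's theorem for a retarded equation: on a short interval `[a, b)` the integral equation
`Q(s) = q₀ + ∫_{t₀}^s F(Q(π(τ)), τ) dτ` has a continuous solution in the ball of radius `R`,
by contraction for the uniform norm. The integrand is cut off outside `[a, b)`, so that the
equation makes sense on the whole line. -/
lemma exists_picard [CompleteSpace E] {F : E → ℝ → E} {π : ℝ → ℝ} {t₀ a b R M L : ℝ} {q₀ : E}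
    (hab : a ≤ b) (hR : 0 ≤ R) (hM0 : 0 ≤ M) (hL0 : 0 ≤ L)
    (hmeas : ∀ Q : ℝ → E, Continuous Q → (∀ s, Q s ∈ Metric.closedBall q₀ R) →
      AEStronglyMeasurable (fun s => F (Q (π s)) s) (volume.restrict (Ico a b)))
    (hM : ∀ᵐ s ∂(volume.restrict (Ico a b)), ∀ x ∈ Metric.closedBall q₀ R, ‖F x s‖ ≤ M)
    (hL : ∀ᵐ s ∂(volume.restrict (Ico a b)), ∀ x₁ ∈ Metric.closedBall q₀ R,
      ∀ x₂ ∈ Metric.closedBall q₀ R, ‖F x₁ s - F x₂ s‖ ≤ L * ‖x₁ - x₂‖)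
    (hMR : M * (b - a) ≤ R) (hLb : L * (b - a) < 1) :
    ∃ Q : ℝ → E, Continuous Q ∧ (∀ s, Q s ∈ Metric.closedBall q₀ R) ∧
      ∀ s, Q s = primitiveAt t₀ q₀ ((Ico a b).indicator fun τ => F (Q (π τ)) τ) s := by
  let X : Set (ℝ →ᵇ E) := {Q | ∀ s, Q s ∈ Metric.closedBall q₀ R}
  have hX : IsClosed X := by
    have : X = ⋂ s, (fun Q : ℝ →ᵇ E => Q s) ⁻¹' Metric.closedBall q₀ R := by
      ext Q; simp [X]
    rw [this]
    exact isClosed_iInter fun s =>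
      Metric.isClosed_closedBall.preimage (continuous_eval_const (x := s))
  have hcX : CompleteSpace X := hX.isComplete.completeSpace_coe
  have hne : Nonempty X := ⟨⟨BoundedContinuousFunction.const ℝ q₀, fun s => by simp [hR]⟩⟩
  let D : X → ℝ → E := fun Q => (Ico a b).indicator fun τ => F (Q.1 (π τ)) τ
  have hDm : ∀ Q : X, AEStronglyMeasurable (D Q) volume := fun Q =>
    (aestronglyMeasurable_indicator_iff measurableSet_Ico).2 (hmeas Q.1 Q.1.continuous Q.2)
  have hDM : ∀ Q : X, ∀ᵐ s ∂(volume.restrict (Ico a b)), ‖F (Q.1 (π s)) s‖ ≤ M := fun Q =>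
    hM.mono fun s hs => hs _ (Q.2 _)
  have hDM' : ∀ Q : X, ∀ᵐ s, ‖D Q s‖ ≤ M := fun Q => by
    filter_upwards [(ae_restrict_iff' measurableSet_Ico).1 (hDM Q)] with s hs
    by_cases h : s ∈ Ico a b
    · simpa [D, h] using hs h
    · simpa [D, h] using hM0
  have hball : ∀ (Q : X) s, ‖primitiveAt t₀ q₀ (D Q) s - q₀‖ ≤ R := fun Q s => by
    rw [primitiveAt, add_sub_cancel_left]
    exact (norm_integral_indicator_le hab hM0 (hDM Q) _ _).trans hMR
  let Φ : X → X := fun Q =>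
    ⟨BoundedContinuousFunction.ofNormedAddCommGroup (primitiveAt t₀ q₀ (D Q))
      (continuous_primitiveAt (hDm Q) (hDM' Q) t₀ q₀) (‖q₀‖ + R)
      (fun s => (norm_le_norm_add_norm_sub' _ q₀).trans
        (by gcongr; exact hball Q s)),
      fun s => by simpa [dist_eq_norm] using hball Q s⟩
  have hΦ : ContractingWith ⟨L * (b - a), mul_nonneg hL0 (sub_nonneg.2 hab)⟩ Φ := by
    refine ⟨by exact_mod_cast hLb, LipschitzWith.of_dist_le_mul fun Q₁ Q₂ => ?_⟩
    refine (BoundedContinuousFunction.dist_le (mul_nonneg (NNReal.coe_nonneg _) dist_nonneg)).2 fun s => ?_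
    have hi := fun Q => intervalIntegrable_of_bound (hDm Q) (hDM' Q)
    have hd : primitiveAt t₀ q₀ (D Q₁) s - primitiveAt t₀ q₀ (D Q₂) s =
        ∫ τ in t₀..s, (Ico a b).indicator
          (fun τ => F (Q₁.1 (π τ)) τ - F (Q₂.1 (π τ)) τ) τ := by
      rw [primitiveAt, primitiveAt, add_sub_add_left_eq_sub,
        ← intervalIntegral.integral_sub (hi _ _ _) (hi _ _ _)]
      simp only [D, indicator_sub]
    change dist (primitiveAt t₀ q₀ (D Q₁) s) (primitiveAt t₀ q₀ (D Q₂) s) ≤ _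
    rw [dist_eq_norm, hd]
    have hdist : (0 : ℝ) ≤ L * dist Q₁ Q₂ := by positivity
    refine (norm_integral_indicator_le hab hdist (hL.mono fun τ hτ => ?_) t₀ s).trans
      (le_of_eq ?_)
    · refine (hτ _ (Q₁.2 _) _ (Q₂.2 _)).trans (mul_le_mul_of_nonneg_left ?_ hL0)
      rw [← dist_eq_norm]
      exact BoundedContinuousFunction.dist_coe_le_dist _
    · change L * dist Q₁ Q₂ * (b - a) = L * (b - a) * dist Q₁ Q₂
      ring
  refine ⟨(hΦ.fixedPoint Φ).1, (hΦ.fixedPoint Φ).1.continuous, (hΦ.fixedPoint Φ).2, fun s => ?_⟩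
  have h := congrArg (fun Q : X => Q.1 s) hΦ.fixedPoint_isFixedPt
  exact h.symm

end Primitive

/-! ### Densities of local solutions -/

section Density

variable {n : ℕ} {T : Set ℝ} {Ω : Set (EuclideanSpace ℝ (Fin n))}
  {f : EuclideanSpace ℝ (Fin n) → ℝ → EuclideanSpace ℝ (Fin n)}
  {t₀ : ℝ} {q₀ : EuclideanSpace ℝ (Fin n)}

/-- `g` is an essentially bounded function on the real line whose primitive `Q` through
`(t₀, q₀)` solves the retarded equation `Q'(s) = f (Q (lastPt T s)) (lastPt T s)` a.e. on
`[a, b)` and stays in `Ω` at the points of `[a, b]_𝕋`. Outside `[a, b)` the values of `g` are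
irrelevant up to boundedness. -/
structure IsSolDensity (T : Set ℝ) (Ω : Set (EuclideanSpace ℝ (Fin n)))
    (f : EuclideanSpace ℝ (Fin n) → ℝ → EuclideanSpace ℝ (Fin n))
    (t₀ : ℝ) (q₀ : EuclideanSpace ℝ (Fin n)) (a b M : ℝ)
    (g : ℝ → EuclideanSpace ℝ (Fin n)) : Prop where
  meas : AEStronglyMeasurable g volume
  nonneg : 0 ≤ M
  bound : ∀ᵐ s, ‖g s‖ ≤ M
  mem : ∀ t ∈ Icc a b ∩ T, primitiveAt t₀ q₀ g t ∈ Ω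
  eqn : ∀ᵐ s, s ∈ Ico a b → g s = f (primitiveAt t₀ q₀ g (lastPt T s)) (lastPt T s)

lemma deltaAC_of_lipschitz {q : ℝ → EuclideanSpace ℝ (Fin n)} {a b M : ℝ} (hM : 0 ≤ M)
    (h : ∀ u v, ‖q v - q u‖ ≤ M * |v - u|) : DeltaAC T a b q := by
  intro ε hε
  refine ⟨ε / (M + 1), by positivity, fun m u v _ _ huv _ hsum => ?_⟩
  have hs0 : 0 ≤ ∑ k ∈ Finset.range m, (v k - u k) :=
    Finset.sum_nonneg fun k hk => sub_nonneg.2 (huv k (Finset.mem_range.1 hk))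
  calc ∑ k ∈ Finset.range m, ‖q (v k) - q (u k)‖
      ≤ ∑ k ∈ Finset.range m, M * (v k - u k) := by
        refine Finset.sum_le_sum fun k hk => (h _ _).trans (le_of_eq ?_)
        rw [abs_of_nonneg (sub_nonneg.2 (huv k (Finset.mem_range.1 hk)))]
    _ = M * ∑ k ∈ Finset.range m, (v k - u k) := by rw [Finset.mul_sum]
    _ ≤ (M + 1) * ∑ k ∈ Finset.range m, (v k - u k) := by gcongr; linarith
    _ < ε := by rwa [lt_div_iff₀' (by positivity)] at hsum

lemma hasDeltaDerivAt_of_rightDense {q : ℝ → EuclideanSpace ℝ (Fin n)}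
    {q' : EuclideanSpace ℝ (Fin n)} {t : ℝ} (ht : RightDense T t) (h : HasDerivAt q q' t) :
    HasDeltaDerivAt T q q' t := by
  intro ε hε
  have ht' : tsSigma T t = t := ht
  refine ⟨_, (hasDerivAt_iff_isLittleO.1 h).def hε, fun s hs => ?_⟩
  have h1 : ‖q s - q t - (s - t) • q'‖ ≤ ε * ‖s - t‖ := hs.1
  rw [ht', abs_sub_comm, ← Real.norm_eq_abs]
  refine le_trans (le_of_eq ?_) h1
  rw [← norm_neg]
  congr 1
  module

lemma hasDeltaDerivAt_of_rightScattered {q : ℝ → EuclideanSpace ℝ (Fin n)}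
    {q' : EuclideanSpace ℝ (Fin n)} {t : ℝ} (ht : RightScattered T t) (hc : ContinuousAt q t)
    (h : q (tsSigma T t) - q t = (tsSigma T t - t) • q') : HasDeltaDerivAt T q q' t := by
  intro ε hε
  have ht' : t < tsSigma T t := ht
  have h1 : ContinuousAt (fun s => ‖q (tsSigma T t) - q s - (tsSigma T t - s) • q'‖) t := by
    fun_prop
  have h2 : ContinuousAt (fun s => ε * |tsSigma T t - s|) t := by fun_prop
  refine ⟨{s | ‖q (tsSigma T t) - q s - (tsSigma T t - s) • q'‖ ≤ ε * |tsSigma T t - s|}, ?_,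
    fun s hs => hs.1⟩
  refine (h1.eventually_lt h2 ?_).mono fun s hs => hs.le
  rw [h, sub_self, norm_zero]
  exact mul_pos hε (abs_pos.2 (sub_pos.2 ht').ne')

/-- The primitive of a density solves the Δ-Cauchy problem: at a right-dense point this is
Lebesgue differentiation, and on a gap `[t, σ(t))` the density is constant, so that the increment
over the gap is `μ(t) f(q(t), t)`. -/
lemma IsSolDensity.isSolIcc (hT : IsClosed T) {a b M : ℝ} (hb : b ∈ T)
    {g : ℝ → EuclideanSpace ℝ (Fin n)} (h : IsSolDensity T Ω f t₀ q₀ a b M g) :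
    IsSolIcc T Ω f t₀ q₀ (primitiveAt t₀ q₀ g) a b := by
  refine ⟨h.mem, deltaAC_of_lipschitz h.nonneg (norm_primitiveAt_sub_le h.meas h.bound t₀ q₀),
    primitiveAt_self _ _ _, ?_⟩
  rw [ae_deltaMeasure_iff (measurableSet_Ico.inter hT.measurableSet) inter_subset_right]
  have hrs : ∀ t ∈ Ico a b ∩ T, RightScattered T t →
      HasDeltaDerivAt T (primitiveAt t₀ q₀ g) (f (primitiveAt t₀ q₀ g t) t) t := by
    intro t ht hts
    refine hasDeltaDerivAt_of_rightScattered hts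
      (continuous_primitiveAt h.meas h.bound t₀ q₀).continuousAt ?_
    have hσb : tsSigma T t ≤ b := tsSigma_le hb ht.1.2
    have hconst : ∫ τ in t..tsSigma T t, g τ =
        ∫ _ in t..tsSigma T t, f (primitiveAt t₀ q₀ g t) t := by
      refine intervalIntegral.integral_congr_ae ?_
      have hne : ∀ᵐ s : ℝ, s ≠ tsSigma T t := by
        simp [ae_iff]
      filter_upwards [h.eqn, hne] with s hs hsne hsI
      rw [uIoc_of_le le_tsSigma] at hsI
      have hsσ : s < tsSigma T t := lt_of_le_of_ne hsI.2 hsne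
      rw [hs ⟨ht.1.1.trans hsI.1.le, hsσ.trans_le hσb⟩, lastPt_of_mem_gap ht.2 hsI.1.le hsσ]
    rw [primitiveAt_sub h.meas h.bound, hconst, intervalIntegral.integral_const]
  refine ⟨?_, hrs⟩
  filter_upwards [LocallyIntegrable.ae_hasDerivAt_integral
    (locallyIntegrable_of_bound h.meas h.bound), h.eqn]
    with t hd heq ht
  rcases rightDense_or_rightScattered T t with hrd | hts
  · refine hasDeltaDerivAt_of_rightDense hrd ?_
    have h1 := heq ht.1
    rw [lastPt_eq ht.2] at h1
    rw [← h1]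
    exact (hd t₀).const_add q₀
  · exact hrs t ht hts

/-- Densities on both sides of `t₀` glue to a density on the union. -/
lemma IsSolDensity.glue (ht₀ : t₀ ∈ T) {a b M₁ M₂ : ℝ} (ha : a ∈ T)
    {g₁ g₂ : ℝ → EuclideanSpace ℝ (Fin n)} (h₁ : IsSolDensity T Ω f t₀ q₀ a t₀ M₁ g₁)
    (h₂ : IsSolDensity T Ω f t₀ q₀ t₀ b M₂ g₂) :
    IsSolDensity T Ω f t₀ q₀ a b (max M₁ M₂) ((Iio t₀).piecewise g₁ g₂) := by
  have hl : ∀ s ≤ t₀, primitiveAt t₀ q₀ ((Iio t₀).piecewise g₁ g₂) s = primitiveAt t₀ q₀ g₁ s := by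
    intro s hs
    unfold primitiveAt
    congr 1
    refine intervalIntegral.integral_congr_ae ?_
    have hne : ∀ᵐ τ : ℝ, τ ≠ t₀ := by simp [ae_iff]
    filter_upwards [hne] with τ hτ hτI
    rw [uIoc_of_ge hs] at hτI
    exact piecewise_eq_of_mem _ _ _ (lt_of_le_of_ne hτI.2 hτ)
  have hr : ∀ s, t₀ ≤ s →
      primitiveAt t₀ q₀ ((Iio t₀).piecewise g₁ g₂) s = primitiveAt t₀ q₀ g₂ s := by
    intro s hs
    unfold primitiveAt
    congr 1
    refine intervalIntegral.integral_congr_ae (Eventually.of_forall fun τ hτI => ?_)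
    rw [uIoc_of_le hs] at hτI
    exact piecewise_eq_of_notMem _ _ _ (not_lt.2 hτI.1.le)
  refine ⟨?_, le_max_of_le_left h₁.nonneg, ?_, ?_, ?_⟩
  · exact AEStronglyMeasurable.piecewise measurableSet_Iio h₁.meas.restrict h₂.meas.restrict
  · filter_upwards [h₁.bound, h₂.bound] with s hs₁ hs₂
    by_cases hs : s ∈ Iio t₀
    · simpa [hs] using Or.inl hs₁
    · simpa [hs] using Or.inr hs₂
  · rintro t ⟨ht, htT⟩
    rcases le_total t t₀ with h | h
    · rw [hl t h]
      exact h₁.mem t ⟨⟨ht.1, h⟩, htT⟩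
    · rw [hr t h]
      exact h₂.mem t ⟨⟨h, ht.2⟩, htT⟩
  · filter_upwards [h₁.eqn, h₂.eqn] with s hs₁ hs₂ hs
    rcases lt_or_ge s t₀ with h | h
    · rw [piecewise_eq_of_mem _ _ _ (show s ∈ Iio t₀ from h), hs₁ ⟨hs.1, h⟩,
        hl _ ((lastPt_le ha hs.1).trans h.le)]
    · rw [piecewise_eq_of_notMem _ _ _ (show s ∉ Iio t₀ from not_lt.2 h), hs₂ ⟨h, hs.2⟩,
        hr _ (le_lastPt ht₀ h)]

/-! ### Existence of densities -/

/-- Existence of a density on a short interval `[a, b)` where `f` is bounded and Lipschitz in the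
closed ball of radius `R` about `q₀`. -/
lemma exists_isSolDensity_of_lipschitz (hT : IsClosed T) (hf : DeltaCaratheodory T Ω f)
    {a b R M L : ℝ} (ha : a ∈ T) (hb : b ∈ T) (hab : a ≤ b) (hR : 0 ≤ R) (hM0 : 0 ≤ M)
    (hL0 : 0 ≤ L) (hKΩ : Metric.closedBall q₀ R ⊆ Ω)
    (hM : ∀ᵐ t ∂((deltaMeasure T).restrict (Ico a b ∩ T)),
      ∀ x ∈ Metric.closedBall q₀ R, ‖f x t‖ ≤ M)
    (hL : ∀ᵐ t ∂((deltaMeasure T).restrict (Ico a b ∩ T)), ∀ x₁ ∈ Metric.closedBall q₀ R,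
      ∀ x₂ ∈ Metric.closedBall q₀ R, ‖f x₁ t - f x₂ t‖ ≤ L * ‖x₁ - x₂‖)
    (hMR : M * (b - a) ≤ R) (hLb : L * (b - a) < 1) :
    ∃ g, IsSolDensity T Ω f t₀ q₀ a b M g := by
  let K := Metric.closedBall q₀ R
  have hπ : AEMeasurable (lastPt T) (volume.restrict (Ico a b)) :=
    aemeasurable_restrict_of_monotoneOn measurableSet_Ico (lastPt_monotoneOn ha)
  have hu : ∀ x ∈ K,
      AEStronglyMeasurable (fun s => f x (lastPt T s)) (volume.restrict (Ico a b)) := by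
    intro x hx
    obtain ⟨φ, hφ, hφe⟩ := hf.1 x (hKΩ hx)
    exact ((hφ.comp_aemeasurable hπ).congr
      ((ae_lastPt hT ha hb (ae_Ico_of_ae_upDomain hb hφe)).mono
        fun s hs => Eq.symm hs)).aestronglyMeasurable
  have hc : ∀ᵐ s ∂(volume.restrict (Ico a b)), ContinuousOn (fun x => f x (lastPt T s)) K :=
    (ae_lastPt hT ha hb (ae_Ico_of_ae_upDomain hb hf.2)).mono fun s hs => hs.mono hKΩ
  have hM' := ae_lastPt hT ha hb hM
  have hmeas : ∀ Q : ℝ → EuclideanSpace ℝ (Fin n), Continuous Q → (∀ s, Q s ∈ K) →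
      AEStronglyMeasurable (fun s => f (Q (lastPt T s)) (lastPt T s))
        (volume.restrict (Ico a b)) := by
    intro Q hQ hQK
    obtain ⟨π', hπ', hπe⟩ := hπ
    refine (aestronglyMeasurable_superposition (u := fun x s => f x (lastPt T s)) hu hc
      (hQ.measurable.comp hπ') fun s => hQK _).congr ?_
    filter_upwards [hπe] with s hs
    simp [hs]
  obtain ⟨Q, hQ, hQK, hQe⟩ := exists_picard (t₀ := t₀) (F := fun x s => f x (lastPt T s)) hab hR hM0
    hL0 hmeas hM' (ae_lastPt hT ha hb hL) hMR hLb
  refine ⟨_, ?_, hM0, ?_, fun t _ => hQe t ▸ hKΩ (hQK t), ?_⟩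
  · exact (aestronglyMeasurable_indicator_iff measurableSet_Ico).2 (hmeas Q hQ hQK)
  · filter_upwards [(ae_restrict_iff' measurableSet_Ico).1 hM'] with s hs
    by_cases h : s ∈ Ico a b
    · simpa [h] using hs h _ (hQK _)
    · simpa [h] using hM0
  · refine Eventually.of_forall fun s hs => ?_
    rw [indicator_of_mem hs, ← hQe]

/-- A step over one gap: a constant density. -/
lemma isSolDensity_const {a b : ℝ} (hat : a ∈ T) (hσ : tsSigma T a = b)
    {x : EuclideanSpace ℝ (Fin n)} (hxΩ : x ∈ Ω) (hyΩ : x + tsGrain T a • f x a ∈ Ω)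
    (hx : primitiveAt t₀ q₀ (fun _ => f x a) a = x) :
    IsSolDensity T Ω f t₀ q₀ a b ‖f x a‖ fun _ => f x a := by
  have hM : ∀ᵐ s : ℝ, ‖(fun _ : ℝ => f x a) s‖ ≤ ‖f x a‖ := Eventually.of_forall fun _ => le_rfl
  refine ⟨aestronglyMeasurable_const, norm_nonneg _, hM, ?_, ?_⟩
  · rintro t ⟨ht, htT⟩
    rcases ht.1.eq_or_lt with rfl | hlt
    · rwa [hx]
    · have htb : t = b := le_antisymm ht.2 (hσ ▸ tsSigma_le htT hlt)
      have h1 := primitiveAt_sub aestronglyMeasurable_const hM t₀ q₀ a t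
      rw [hx, intervalIntegral.integral_const, sub_eq_iff_eq_add', htb] at h1
      rw [htb, h1]
      simpa [tsGrain, hσ] using hyΩ
  · refine Eventually.of_forall fun s hs => ?_
    rw [lastPt_of_mem_gap hat hs.1 (hσ ▸ hs.2), hx]

/-- Three smallness conditions on the length of an interval. -/
lemma exists_small {δ R M L : ℝ} (hδ : 0 < δ) (hR : 0 < R) (hM : 0 ≤ M) (hL : 0 ≤ L) :
    ∃ η > 0, η ≤ δ ∧ ∀ ℓ, 0 ≤ ℓ → ℓ < η → M * ℓ ≤ R ∧ L * ℓ < 1 := by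
  refine ⟨min δ (min (R / (M + 1)) (1 / (L + 1))), by positivity, min_le_left _ _,
    fun ℓ h0 hℓ => ?_⟩
  simp only [lt_min_iff] at hℓ
  obtain ⟨_, h1, h2⟩ := hℓ
  rw [lt_div_iff₀ (by positivity)] at h1 h2
  exact ⟨by nlinarith, by nlinarith⟩

lemma exists_right (hT : IsClosed T) (hf : DeltaCaratheodory T Ω f) (ht₀ : t₀ ∈ T) (hq₀ : q₀ ∈ Ω)
    (hng : ¬ IsGreatest T t₀) (hinf : HInfty T Ω f) (hrd : HrdLocLip T Ω f)
    (hst : HforwStab T Ω f) :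
    ∃ b ∈ T, t₀ < b ∧ ∃ M g, IsSolDensity T Ω f t₀ q₀ t₀ b M g := by
  rcases rightDense_or_rightScattered T t₀ with hd | hs
  · obtain ⟨R, hR, δ, hδ, L, hL0, hKΩ, hδT, hL⟩ := hrd q₀ hq₀ t₀ ht₀ hng hd
    obtain ⟨M, hM0, hM⟩ := hinf _ hKΩ (isCompact_closedBall q₀ R) t₀ ht₀ _ hδT (by linarith)
    obtain ⟨η, hη, hηδ, hsm⟩ := exists_small hδ hR hM0 hL0
    -- right-density provides points of `T` arbitrarily close to `t₀` on its right
    have hd' : tsSigma T t₀ = t₀ := hd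
    rw [tsSigma_of_lt hδT (by linarith)] at hd'
    obtain ⟨b, ⟨hbT, htb⟩, hbη⟩ := exists_lt_of_csInf_lt (s := {s | s ∈ T ∧ t₀ < s})
      ⟨_, hδT, by linarith⟩ (show sInf {s | s ∈ T ∧ t₀ < s} < t₀ + η by linarith)
    have hsub : Ico t₀ b ∩ T ⊆ Ico t₀ (t₀ + δ) ∩ T :=
      inter_subset_inter_left _ (Ico_subset_Ico_right (by linarith))
    obtain ⟨h1, h2⟩ := hsm (b - t₀) (by linarith) (by linarith)
    exact ⟨b, hbT, htb, M, exists_isSolDensity_of_lipschitz hT hf ht₀ hbT htb.le hR.le hM0 hL0 hKΩ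
      (ae_restrict_of_ae_restrict_of_subset hsub hM)
      (ae_restrict_of_ae_restrict_of_subset hsub hL) h1 h2⟩
  · exact ⟨tsSigma T t₀, tsSigma_mem hT ht₀, hs, _, _, isSolDensity_const ht₀ rfl hq₀
      (hst t₀ ht₀ hs q₀ hq₀) (primitiveAt_self _ _ _)⟩

lemma exists_left (hT : IsClosed T) (hf : DeltaCaratheodory T Ω f) (ht₀ : t₀ ∈ T) (hq₀ : q₀ ∈ Ω)
    (hnl : ¬ IsLeast T t₀) (hinf : HInfty T Ω f) (hld : HldLocLip T Ω f)
    (hbr : HbackRegr T Ω f) :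
    ∃ a ∈ T, a < t₀ ∧ ∃ M g, IsSolDensity T Ω f t₀ q₀ a t₀ M g := by
  have hne : {s | s ∈ T ∧ s < t₀}.Nonempty := by
    by_contra h
    refine hnl ⟨ht₀, fun x hx => ?_⟩
    by_contra! hlt
    exact h ⟨x, hx, hlt⟩
  have hbdd : BddAbove {s | s ∈ T ∧ s < t₀} := ⟨t₀, fun _ hx => hx.2.le⟩
  have hρ : tsRho T t₀ = sSup {s | s ∈ T ∧ s < t₀} := if_pos hne
  have hρle : tsRho T t₀ ≤ t₀ := hρ ▸ csSup_le hne fun _ hx => hx.2.le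
  rcases hρle.eq_or_lt with hd | hs
  · obtain ⟨R, hR, δ, hδ, L, hL0, hKΩ, hδT, hL⟩ := hld q₀ hq₀ t₀ ht₀ hnl hd
    obtain ⟨M, hM0, hM⟩ := hinf _ hKΩ (isCompact_closedBall q₀ R) _ hδT t₀ ht₀ (by linarith)
    obtain ⟨η, hη, hηδ, hsm⟩ := exists_small hδ hR hM0 hL0
    -- left-density provides points of `T` arbitrarily close to `t₀` on its left
    obtain ⟨a, ⟨haT, hat⟩, haη⟩ := exists_lt_of_lt_csSup hne
      (show t₀ - η < sSup {s | s ∈ T ∧ s < t₀} by rw [← hρ, hd]; linarith)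
    have hsub : Ico a t₀ ∩ T ⊆ Ico (t₀ - δ) t₀ ∩ T :=
      inter_subset_inter_left _ (Ico_subset_Ico_left (by linarith))
    obtain ⟨h1, h2⟩ := hsm (t₀ - a) (by linarith) (by linarith)
    exact ⟨a, haT, hat, M, exists_isSolDensity_of_lipschitz hT hf haT ht₀ hat.le hR.le hM0 hL0 hKΩ
      (ae_restrict_of_ae_restrict_of_subset hsub hM)
      (ae_restrict_of_ae_restrict_of_subset hsub hL) h1 h2⟩
  · have haT : tsRho T t₀ ∈ T := by
      rw [hρ]
      exact hT.closure_subset_iff.2 (fun x hx => hx.1) (csSup_mem_closure hne hbdd)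
    set a := tsRho T t₀ with ha
    have hσ : tsSigma T a = t₀ := by
      refine le_antisymm (tsSigma_le ht₀ hs) ?_
      rw [tsSigma_of_lt ht₀ hs]
      refine le_csInf ⟨t₀, ht₀, hs⟩ fun x hx => ?_
      by_contra! hlt
      exact absurd (hρ ▸ le_csSup hbdd ⟨hx.1, hlt⟩ : x ≤ a) (not_le.2 hx.2)
    have hrs : RightScattered T a := by rwa [RightScattered, hσ]
    -- the value at `a` is the preimage of `q₀` under the bijection `G⁺(a)`
    obtain ⟨x, hxΩ, hx⟩ := (hbr a haT hrs).surjOn (mem_univ q₀)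
    have hx' : x + tsGrain T a • f x a = q₀ := hx
    refine ⟨a, haT, hs, _, _, isSolDensity_const haT hσ hxΩ (hx'.symm ▸ hq₀) ?_⟩
    rw [primitiveAt, intervalIntegral.integral_const, ← hx', tsGrain, hσ]
    module

end Density

theorem stmt10 {n : ℕ}
    (T : Set ℝ) (hTclosed : IsClosed T) (hTnontriv : T.Nontrivial)
    (Ω : Set (EuclideanSpace ℝ (Fin n))) (hΩopen : IsOpen Ω) (hΩne : Ω.Nonempty)
    (f : EuclideanSpace ℝ (Fin n) → ℝ → EuclideanSpace ℝ (Fin n)) (hf : DeltaCaratheodory T Ω f)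
    (t₀ : ℝ) (ht₀ : t₀ ∈ T) (q₀ : EuclideanSpace ℝ (Fin n)) (hq₀ : q₀ ∈ Ω)
    (h1 : IsLeast T t₀ → HInfty T Ω f ∧ HrdLocLip T Ω f ∧ HforwStab T Ω f)
    (h2 : IsGreatest T t₀ → HInfty T Ω f ∧ HldLocLip T Ω f ∧ HbackRegr T Ω f)
    (h3 : ¬ IsLeast T t₀ → ¬ IsGreatest T t₀ →
      HInfty T Ω f ∧ HrdLocLip T Ω f ∧ HforwStab T Ω f ∧ HldLocLip T Ω f ∧ HbackRegr T Ω f) :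
    ∃ a ∈ T, ∃ b ∈ T, Trile T t₀ a b ∧
      ∃ q : ℝ → EuclideanSpace ℝ (Fin n), IsSolIcc T Ω f t₀ q₀ q a b := by
  by_cases hl : IsLeast T t₀
  · have hng : ¬ IsGreatest T t₀ := by
      intro hg
      obtain ⟨x, hx, hne⟩ := hTnontriv.exists_ne t₀
      exact hne (le_antisymm (hg.2 hx) (hl.2 hx))
    obtain ⟨hinf, hrd, hst⟩ := h1 hl
    obtain ⟨b, hb, htb, M, g, hg⟩ := exists_right hTclosed hf ht₀ hq₀ hng hinf hrd hst
    exact ⟨t₀, ht₀, b, hb, Or.inl ⟨hl, rfl, htb⟩, _, hg.isSolIcc hTclosed hb⟩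
  by_cases hgr : IsGreatest T t₀
  · obtain ⟨hinf, hld, hbr⟩ := h2 hgr
    obtain ⟨a, ha, hat, M, g, hg⟩ := exists_left hTclosed hf ht₀ hq₀ hl hinf hld hbr
    exact ⟨a, ha, t₀, ht₀, Or.inr (Or.inl ⟨hgr, hat, rfl⟩), _, hg.isSolIcc hTclosed ht₀⟩
  obtain ⟨hinf, hrd, hst, hld, hbr⟩ := h3 hl hgr
  obtain ⟨b, hb, htb, M₂, g₂, hg₂⟩ := exists_right hTclosed hf ht₀ hq₀ hgr hinf hrd hst
  obtain ⟨a, ha, hat, M₁, g₁, hg₁⟩ := exists_left hTclosed hf ht₀ hq₀ hl hinf hld hbr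
  exact ⟨a, ha, b, hb, Or.inr (Or.inr ⟨hl, hgr, hat, htb⟩), _,
    (hg₁.glue ht₀ ha hg₂).isSolIcc hTclosed hb⟩

end
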